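/- arXiv:2304.02540 — 3 statements merged into one kernel-verified Lean document; each statement's English description precedes it below -/
import Mathlib

section
/- Let k ≥ 1 be an integer and β a real number with δ = β − (k−1) < 0, and let ε > 0 be arbitrarily small. Then there exist positive constants q_k, C and x₀ (depending on β, k, δ, ε) such that for all x ≥ x₀ and all y with 0 < y < x, one has φ_{Φ_k,β}(x,y) ≤ C · x^{1/2 + (1−δ)ε} · y^{1/(2(1−δ)) − ε} · exp(−√(q_k · log x · log log x)). -/
/-!
For `n ≠ 0` one has `Φ_k(n) ≥ c n ^ (k - η)` for every `η > 0`: once all coordinates but one are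
chosen, at least `n / 3 ^ ω(n)` choices of the last one succeed. Indeed, modulo a prime power three
consecutive `x` never all make `s + x ^ 2` a non-unit, the Chinese remainder theorem multiplies
these counts, and `3 ^ ω(n) = O(n ^ η)`. Hence `φ_{Φ_k,β}(x, y) = O(y ^ (1 / b))` for every
`b < 1 - δ`. If `y ≤ x ^ θ` with `θ < 1 - δ`, taking `b` strictly between `θ` and `1 - δ` beats
`x ^ (1/2) y ^ (1 / (2 (1 - δ)))` by a power of `x`, which dominates `exp √(q log x log log x)`.
-/

open Filter Real

/-- `Φ_k(n)`: the number of `k`-tuples `(x_1, …, x_k)` over `ℤ/nℤ` such that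
`x_1² + ⋯ + x_k²` is a unit modulo `n`. -/
noncomputable def genTotient (k n : ℕ) : ℕ :=
  Nat.card {x : Fin k → ZMod n // IsUnit (∑ i, x i ^ 2)}

/-- The counting function `φ_{Φ_k,β}(x,y) = #{n ≤ x : Φ_k(n)/n^β ≤ y}`. -/
noncomputable def phiCount (k : ℕ) (β x y : ℝ) : ℕ :=
  Nat.card {n : ℕ | 0 < n ∧ (n : ℝ) ≤ x ∧ (genTotient k n : ℝ) / (n : ℝ) ^ β ≤ y}

/-- `α_k(p)`: the value of the multiplicative function `α_k` at a prime `p`. -/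
noncomputable def alphaK (k p : ℕ) : ℝ :=
  if p = 2 then 1 else 1 - (-1 : ℝ) ^ (k * (p - 1) / 4) / (p : ℝ) ^ (k / 2)

/-- The Euler product `R_{k,β}(z)` for real `z > 0`. -/
noncomputable def eulerR (k : ℕ) (z : ℝ) : ℝ :=
  ∏' p : Nat.Primes, (1 - 1 / (p : ℝ) + 1 / (p : ℝ) * ((p : ℝ) / ((p : ℝ) - 1)) ^ z *
    (if Even k then (alphaK k p) ^ (-z) else 1))

open scoped ArithmeticFunction.omega

/-- The number of `x` in a (finite) semiring for which `s + x ^ 2` is a unit. For `s` a sum of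
squares over `ZMod n` it counts the ways to complete a tuple counted by `genTotient`. -/
noncomputable def unitAddSqCount {R : Type*} [Semiring R] (s : R) : ℕ :=
  Nat.card {x : R // IsUnit (s + x ^ 2)}

lemma isUnit_add_sq_or_isUnit_add_sq_add_one_or_add_two {R : Type*} [CommRing R] [IsLocalRing R]
    (s x : R) :
    IsUnit (s + x ^ 2) ∨ IsUnit (s + (x + 1) ^ 2) ∨ IsUnit (s + (x + 2) ^ 2) := by
  by_contra! h
  simp only [← mem_nonunits_iff, ← IsLocalRing.mem_maximalIdeal,
    ← IsLocalRing.residue_eq_zero_iff, map_add, map_pow, map_one, map_ofNat] at h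
  obtain ⟨h0, h1, h2⟩ := h
  set t := IsLocalRing.residue R x
  have first_difference : 2 * t + 1 = 0 := by linear_combination h1 - h0
  have second_difference : (2 : IsLocalRing.ResidueField R) = 0 := by
    linear_combination h2 - 2 * h1 + h0
  exact one_ne_zero (by linear_combination first_difference - t * second_difference :
    (1 : IsLocalRing.ResidueField R) = 0)

lemma card_le_three_mul_unitAddSqCount {R : Type*} [CommRing R] [IsLocalRing R] [Finite R]
    (s : R) : Nat.card R ≤ 3 * unitAddSqCount s := by
  let shifted (c : R) : Set R := {x | IsUnit (s + (x + c) ^ 2)}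
  have ncard_shifted (c : R) : (shifted c).ncard = unitAddSqCount s :=
    Nat.card_congr ((Equiv.addRight c).subtypeEquiv fun _ ↦ Iff.rfl)
  have cover : shifted 0 ∪ (shifted 1 ∪ shifted 2) = Set.univ := by
    refine Set.eq_univ_of_forall fun x ↦ ?_
    simpa [shifted] using isUnit_add_sq_or_isUnit_add_sq_add_one_or_add_two s x
  calc Nat.card R = (shifted 0 ∪ (shifted 1 ∪ shifted 2)).ncard := by rw [cover, Set.ncard_univ]
    _ ≤ (shifted 0).ncard + ((shifted 1).ncard + (shifted 2).ncard) :=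
        (Set.ncard_union_le _ _).trans (Nat.add_le_add_left (Set.ncard_union_le _ _) _)
    _ = 3 * unitAddSqCount s := by simp only [ncard_shifted]; ring

lemma unitAddSqCount_ringEquiv {R S : Type*} [Semiring R] [Semiring S] (e : R ≃+* S) (s : R) :
    unitAddSqCount (e s) = unitAddSqCount s :=
  .symm <| Nat.card_congr <| e.toEquiv.subtypeEquiv fun x ↦ by
    rw [← MulEquiv.isUnit_map e, map_add, map_pow]
    rfl

lemma unitAddSqCount_prod {R S : Type*} [Semiring R] [Semiring S] (s : R × S) :
    unitAddSqCount s = unitAddSqCount s.1 * unitAddSqCount s.2 := by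
  unfold unitAddSqCount
  rw [← Nat.card_prod]
  exact Nat.card_congr <| (Equiv.subtypeEquivRight fun _ ↦ Prod.isUnit_iff).trans
    (Equiv.subtypeProdEquivProd (p := fun x ↦ IsUnit (s.1 + x ^ 2))
      (q := fun x ↦ IsUnit (s.2 + x ^ 2)))

lemma isLocalRing_zmod_prime_pow {p e : ℕ} (hp : p.Prime) (he : e ≠ 0) :
    IsLocalRing (ZMod (p ^ e)) := by
  have : Fact p.Prime := ⟨hp⟩
  have : Fact (1 < p ^ e) := ⟨Nat.one_lt_pow he hp.one_lt⟩
  exact .of_surjective' (PadicInt.toZModPow e) (ZMod.ringHom_surjective _)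

lemma le_three_pow_omega_mul_unitAddSqCount (n : ℕ) (s : ZMod n) :
    n ≤ 3 ^ ω n * unitAddSqCount s := by
  induction n using Nat.recOnPosPrimePosCoprime with
  | zero => exact Nat.zero_le _
  | one =>
    have : Nonempty {x : ZMod 1 // IsUnit (s + x ^ 2)} := ⟨0, isUnit_of_subsingleton _⟩
    have unitAddSqCount_pos : 0 < unitAddSqCount s := Nat.card_pos
    simpa [Nat.one_le_iff_ne_zero] using unitAddSqCount_pos.ne'
  | prime_pow p e hp he =>
    have : NeZero p := ⟨hp.ne_zero⟩
    have := isLocalRing_zmod_prime_pow hp he.ne'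
    simpa [ArithmeticFunction.cardDistinctFactors_apply_prime_pow hp he.ne'] using
      card_le_three_mul_unitAddSqCount s
  | coprime a b _ _ hab iha ihb =>
    set t := ZMod.chineseRemainder hab s
    calc a * b ≤ 3 ^ ω a * unitAddSqCount t.1 * (3 ^ ω b * unitAddSqCount t.2) :=
          Nat.mul_le_mul (iha t.1) (ihb t.2)
      _ = 3 ^ ω (a * b) * unitAddSqCount s := by
          rw [← unitAddSqCount_ringEquiv (ZMod.chineseRemainder hab), unitAddSqCount_prod,
            ArithmeticFunction.cardDistinctFactors_mul hab]
          ring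

lemma genTotient_succ (m n : ℕ) [NeZero n] :
    genTotient (m + 1) n = ∑ v : Fin m → ZMod n, unitAddSqCount (∑ i, v i ^ 2) := by
  unfold genTotient unitAddSqCount
  rw [← Nat.card_sigma]
  let split : (Fin (m + 1) → ZMod n) ≃ (Fin m → ZMod n) × ZMod n :=
    (Fin.snocEquiv fun _ ↦ ZMod n).symm.trans (Equiv.prodComm _ _)
  refine Nat.card_congr <| (split.subtypeEquiv fun x ↦ ?_).trans
    (Equiv.subtypeProdEquivSigmaSubtype
      fun (v : Fin m → ZMod n) x ↦ IsUnit (∑ i, v i ^ 2 + x ^ 2))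
  rw [Fin.sum_univ_castSucc]
  rfl

lemma pow_le_three_pow_omega_mul_genTotient {k : ℕ} (hk : k ≠ 0) (n : ℕ) :
    n ^ k ≤ 3 ^ ω n * genTotient k n := by
  obtain rfl | hn := eq_or_ne n 0
  · simp [hk]
  have : NeZero n := ⟨hn⟩
  obtain ⟨m, rfl⟩ := Nat.exists_eq_succ_of_ne_zero hk
  calc n ^ (m + 1) = ∑ _v : Fin m → ZMod n, n := by simp [ZMod.card, pow_succ]
    _ ≤ ∑ v : Fin m → ZMod n, 3 ^ ω n * unitAddSqCount (∑ i, v i ^ 2) :=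
        Finset.sum_le_sum fun _ _ ↦ le_three_pow_omega_mul_unitAddSqCount n _
    _ = 3 ^ ω n * genTotient (m + 1) n := by rw [← Finset.mul_sum, genTotient_succ]

lemma exists_pow_omega_le_mul_rpow {A η : ℝ} (hA : 1 ≤ A) (hη : 0 < η) :
    ∃ C : ℝ, 0 < C ∧ ∀ n : ℕ, n ≠ 0 → A ^ ω n ≤ C * (n : ℝ) ^ η := by
  obtain ⟨P, hP⟩ : ∃ P : ℕ, A ≤ (P : ℝ) ^ η :=
    (((tendsto_rpow_atTop hη).comp tendsto_natCast_atTop_atTop).eventually_ge_atTop A).exists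
  have hA0 : 0 < A := one_pos.trans_le hA
  refine ⟨A ^ P, pow_pos hA0 P, fun n hn ↦ ?_⟩
  have factor_le (p : ℕ) (hp : p ∈ n.primeFactors) :
      A ≤ (if p < P then A else 1) * (p : ℝ) ^ η := by
    have one_le_p : (1 : ℝ) ≤ p := mod_cast (Nat.prime_of_mem_primeFactors hp).one_le
    split_ifs with hpP
    · exact le_mul_of_one_le_right hA0.le (one_le_rpow one_le_p hη.le)
    · rw [one_mul]
      have : (P : ℝ) ≤ p := mod_cast not_lt.mp hpP
      exact hP.trans (rpow_le_rpow P.cast_nonneg this hη.le)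
  have small_primes : (n.primeFactors.filter (· < P)).card ≤ P := by
    simpa using Finset.card_le_card
      (t := Finset.range P) fun p hp ↦ Finset.mem_range.mpr (Finset.mem_filter.mp hp).2
  have radical_le : ((∏ p ∈ n.primeFactors, p : ℕ) : ℝ) ≤ n :=
    mod_cast Nat.le_of_dvd (Nat.pos_of_ne_zero hn) (Nat.prod_primeFactors_dvd n)
  calc A ^ ω n = ∏ _p ∈ n.primeFactors, A := by rw [Finset.prod_const]; rfl
    _ ≤ ∏ p ∈ n.primeFactors, (if p < P then A else 1) * (p : ℝ) ^ η :=
        Finset.prod_le_prod (fun _ _ ↦ hA0.le) factor_le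
    _ = A ^ (n.primeFactors.filter (· < P)).card *
          ((∏ p ∈ n.primeFactors, p : ℕ) : ℝ) ^ η := by
        rw [Finset.prod_mul_distrib, ← Finset.prod_filter, Finset.prod_const, Nat.cast_prod,
          finsetProd_rpow _ _ fun p _ ↦ p.cast_nonneg]
    _ ≤ A ^ P * (n : ℝ) ^ η := by gcongr

lemma exists_rpow_le_mul_genTotient {k : ℕ} (hk : k ≠ 0) {η : ℝ} (hη : 0 < η) :
    ∃ C : ℝ, 0 < C ∧ ∀ n : ℕ, n ≠ 0 → (n : ℝ) ^ (k - η) ≤ C * genTotient k n := by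
  obtain ⟨C, hC, omega_le⟩ := exists_pow_omega_le_mul_rpow (A := 3) (by norm_num) hη
  refine ⟨C, hC, fun n hn ↦ ?_⟩
  have hn0 : (0 : ℝ) < n := mod_cast Nat.pos_of_ne_zero hn
  rw [rpow_sub hn0, rpow_natCast, div_le_iff₀ (by positivity)]
  calc (n : ℝ) ^ k ≤ 3 ^ ω n * genTotient k n :=
        mod_cast pow_le_three_pow_omega_mul_genTotient hk n
    _ ≤ C * (n : ℝ) ^ η * genTotient k n := by gcongr; exact omega_le n hn
    _ = C * genTotient k n * (n : ℝ) ^ η := by ring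

lemma exists_phiCount_le_mul_rpow {k : ℕ} (hk : k ≠ 0) {β b : ℝ} (hb : 0 < b) (hbβ : b < k - β) :
    ∃ C : ℝ, 0 < C ∧ ∀ x y : ℝ, 0 ≤ y → (phiCount k β x y : ℝ) ≤ C * y ^ b⁻¹ := by
  obtain ⟨C, hC, le_genTotient⟩ :=
    exists_rpow_le_mul_genTotient hk (η := k - β - b) (by linarith)
  refine ⟨C ^ b⁻¹, by positivity, fun x y hy ↦ ?_⟩
  rw [← mul_rpow hC.le hy]
  have le_of_ratio_le (n : ℕ) (hn : 0 < n) (hny : (genTotient k n : ℝ) / (n : ℝ) ^ β ≤ y) :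
      (n : ℝ) ≤ (C * y) ^ b⁻¹ := by
    have hn0 : (0 : ℝ) < n := mod_cast hn
    rw [le_rpow_inv_iff_of_pos hn0.le (by positivity) hb]
    calc (n : ℝ) ^ b = (n : ℝ) ^ (k - (k - β - b)) / (n : ℝ) ^ β := by
          rw [← rpow_sub hn0]; congr 1; ring
      _ ≤ C * genTotient k n / (n : ℝ) ^ β := by gcongr; exact le_genTotient n hn.ne'
      _ = C * (genTotient k n / (n : ℝ) ^ β) := mul_div_assoc _ _ _
      _ ≤ C * y := by gcongr
  have counted_subset : {n : ℕ | 0 < n ∧ (n : ℝ) ≤ x ∧ (genTotient k n : ℝ) / (n : ℝ) ^ β ≤ y} ⊆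
      (Finset.Ioc 0 ⌊(C * y) ^ b⁻¹⌋₊ : Finset ℕ) := fun n ⟨hn, _, hny⟩ ↦
    Finset.mem_coe.mpr <| Finset.mem_Ioc.mpr ⟨hn, Nat.le_floor (le_of_ratio_le n hn hny)⟩
  have count_le : phiCount k β x y ≤ ⌊(C * y) ^ b⁻¹⌋₊ := by
    simpa [phiCount, Set.ncard_coe_finset] using
      Set.ncard_le_ncard counted_subset (Finset.finite_toSet _)
  exact (Nat.cast_le.mpr count_le).trans (Nat.floor_le (by positivity))

lemma exists_phiCount_le_rpow_mul_rpow_of_le_rpow {k : ℕ} (hk : k ≠ 0) {β θ : ℝ} (hθ : 0 < θ)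
    (hθβ : θ < k - β) :
    ∃ γ C : ℝ, 0 < γ ∧ 0 < C ∧ ∀ x y : ℝ, 0 < x → 0 < y → y ≤ x ^ θ →
      (phiCount k β x y : ℝ) ≤ C * x ^ (1 / 2 - γ) * y ^ (1 / (2 * (k - β))) := by
  set a := k - β
  have ha : 0 < a := hθ.trans hθβ
  set b := (a + θ) / 2 with hb
  have hb0 : 0 < b := by positivity
  have hba : b < a := by linarith
  obtain ⟨C, hC, count_le⟩ := exists_phiCount_le_mul_rpow hk hb0 hba
  have exponent_nonneg : 0 ≤ b⁻¹ - 1 / (2 * a) := by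
    rw [sub_nonneg, ← one_div]
    exact one_div_le_one_div_of_le hb0 (by linarith)
  have saving : θ * (b⁻¹ - 1 / (2 * a)) = 1 / 2 - (a - θ) ^ 2 / (2 * a * (a + θ)) := by
    rw [hb]
    field_simp
    ring
  have saving_pos : 0 < (a - θ) ^ 2 / (2 * a * (a + θ)) := by
    have : 0 < a - θ := sub_pos.mpr hθβ
    positivity
  refine ⟨_, C, saving_pos, hC, fun x y hx hy hyx ↦ ?_⟩
  calc (phiCount k β x y : ℝ) ≤ C * y ^ b⁻¹ := count_le x y hy.le
    _ = C * y ^ (b⁻¹ - 1 / (2 * a)) * y ^ (1 / (2 * a)) := by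
        rw [mul_assoc, ← rpow_add hy, sub_add_cancel]
    _ ≤ C * (x ^ θ) ^ (b⁻¹ - 1 / (2 * a)) * y ^ (1 / (2 * a)) := by gcongr
    _ = _ := by rw [← rpow_mul hx.le, saving]

lemma rpow_neg_le_exp_neg_sqrt_log_mul_log_log {γ x : ℝ} (hγ : 0 ≤ γ) (hx : exp 1 ≤ x) :
    x ^ (-γ) ≤ exp (-√(γ ^ 2 * log x * log (log x))) := by
  have hx0 : 0 < x := (exp_pos 1).trans_le hx
  have hlog : 0 ≤ log x := zero_le_one.trans ((le_log_iff_exp_le hx0).mpr hx)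
  have sqrt_le : √(γ ^ 2 * log x * log (log x)) ≤ γ * log x := by
    rw [sqrt_le_left (by positivity)]
    calc γ ^ 2 * log x * log (log x) ≤ γ ^ 2 * log x * log x :=
          mul_le_mul_of_nonneg_left (log_le_self hlog) (by positivity)
      _ = (γ * log x) ^ 2 := by ring
  rw [rpow_def_of_pos hx0, exp_le_exp]
  linarith

theorem thm5_general (k : ℕ) (hk : 1 ≤ k) (β δ : ℝ) (hδ : δ = β - ((k : ℝ) - 1))
    (θ : ℝ) (hθ : 0 < θ) (hθδ : θ < 1 - δ) :
    ∃ qk C x₀ : ℝ, 0 < qk ∧ 0 < C ∧ 0 < x₀ ∧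
      ∀ ε x y : ℝ, 0 ≤ ε → x₀ ≤ x → 0 < y → y ≤ x ^ θ →
        (phiCount k β x y : ℝ) ≤
          C * x ^ (1 / 2 + (1 - δ) * ε) * y ^ (1 / (2 * (1 - δ)) - ε) *
            exp (-√(qk * log x * log (log x))) := by
  have hδβ : (k : ℝ) - β = 1 - δ := by linarith
  obtain ⟨γ, C, hγ, hC, count_le⟩ :=
    exists_phiCount_le_rpow_mul_rpow_of_le_rpow (Nat.one_le_iff_ne_zero.mp hk) hθ (hδβ ▸ hθδ)
  rw [hδβ] at count_le
  refine ⟨γ ^ 2, C, exp 1, by positivity, hC, exp_pos 1, fun ε x y hε hx hy hyx ↦ ?_⟩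
  have hx0 : 0 < x := (exp_pos 1).trans_le hx
  have hx1 : 1 ≤ x := (one_le_exp zero_le_one).trans hx
  have rpow_ε_le : y ^ ε ≤ x ^ ((1 - δ) * ε) := by
    rw [rpow_mul hx0.le]
    exact rpow_le_rpow hy.le (hyx.trans (rpow_le_rpow_of_exponent_le hx1 hθδ.le)) hε
  calc (phiCount k β x y : ℝ)
      ≤ C * x ^ (1 / 2 - γ) * y ^ (1 / (2 * (1 - δ))) := count_le x y hx0 hy hyx
    _ = C * (x ^ (1 / 2 : ℝ) * y ^ ε) * y ^ (1 / (2 * (1 - δ)) - ε) * x ^ (-γ) := by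
        rw [sub_eq_add_neg, rpow_add hx0, rpow_sub hy]
        field_simp
    _ ≤ C * (x ^ (1 / 2 : ℝ) * x ^ ((1 - δ) * ε)) * y ^ (1 / (2 * (1 - δ)) - ε) *
          exp (-√(γ ^ 2 * log x * log (log x))) := by
        gcongr
        exact rpow_neg_le_exp_neg_sqrt_log_mul_log_log hγ.le hx
    _ = _ := by rw [← rpow_add hx0]

/-- Theorem 3 (thm5): upper bound for `φ_{Φ_k,β}(x,y)` for `δ < 0` and `0 < y < x`. -/
theorem thm5 (k : ℕ) (hk : 1 ≤ k) (β δ : ℝ) (hδ : δ = β - ((k : ℝ) - 1))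
    (hδ0 : δ < 0) (ε : ℝ) (hε : 0 < ε) :
    ∃ qk C x₀ : ℝ, 0 < qk ∧ 0 < C ∧ 0 < x₀ ∧
      ∀ x y : ℝ, x₀ ≤ x → 0 < y → y < x →
        (phiCount k β x y : ℝ) ≤
          C * x ^ (1 / 2 + (1 - δ) * ε) * y ^ (1 / (2 * (1 - δ)) - ε) *
            Real.exp (-Real.sqrt (qk * Real.log x * Real.log (Real.log x))) := by
  obtain ⟨qk, C, x₀, hqk, hC, hx₀, h⟩ := thm5_general k hk β δ hδ 1 one_pos (by linarith)
  exact ⟨qk, C, x₀, hqk, hC, hx₀, fun x y hx hy hyx ↦ h ε x y hε.le hx hy (by simpa using hyx.le)⟩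
end

section
/- For every integer k ≥ 1, the limsuperior as n → ∞ of Φ_k(n)/n^k equals 1; that is, the maximal order of Φ_k(n) is n^k. -/
open Filter Real

/-!
The sum of squares may be replaced by any nonzero polynomial `f` over `ℤ`. For every large prime
`p` the reduction of `f` modulo `p` is still nonzero, so by the Schwartz–Zippel lemma it vanishes
on a proportion at most `deg f / p` of `(ℤ/pℤ)^k`; off these zeros its values are units. Hence the
proportion of unit values, which never exceeds `1`, tends to `1` along the primes.
-/

open MvPolynomial Topology

lemma limsup_eq_of_eventually_le_of_tendsto {α β : Type*} [ConditionallyCompleteLinearOrder β]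
    [TopologicalSpace β] [OrderTopology β] {l l' : Filter α} [l'.NeBot] (hl : l' ≤ l) {u : α → β}
    {b : β} (hle : ∀ᶠ a in l, u a ≤ b) (hu : Tendsto u l' (𝓝 b)) : limsup u l = b := by
  have hcobdd' : l'.IsCoboundedUnder (· ≤ ·) u := hu.isBoundedUnder_ge.isCoboundedUnder_le
  have hcobdd : l.IsCoboundedUnder (· ≤ ·) u := hcobdd'.mono (map_mono hl)
  apply le_antisymm (limsup_le_of_le hcobdd hle)
  calc
    b = limsup u l' := hu.limsup_eq.symm
    _ ≤ limsup u l := limsup_le_limsup_of_le hl hcobdd' ⟨b, hle⟩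

lemma totalDegree_map_le {σ R S : Type*} [CommSemiring R] [CommSemiring S] (φ : R →+* S)
    (f : MvPolynomial σ R) : (map φ f).totalDegree ≤ f.totalDegree :=
  Finset.sup_mono (support_map_subset φ f)

lemma one_sub_totalDegree_div_card_le_card_eval_ne_zero_div {R : Type*} [CommRing R]
    [IsDomain R] [Finite R] {k : ℕ} {f : MvPolynomial (Fin k) R} (hf : f ≠ 0) :
    1 - (f.totalDegree : ℝ) / Nat.card R ≤
      Nat.card {x : Fin k → R // eval x f ≠ 0} / (Nat.card R : ℝ) ^ k := by
  classical
  have := Fintype.ofFinite R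
  have hzeros : (Nat.card {x : Fin k → R // eval x f = 0} : ℝ) / Nat.card R ^ k ≤
      f.totalDegree / Nat.card R := by
    have h := schwartz_zippel_totalDegree hf Finset.univ
    rw [Fintype.piFinset_univ, ← Fintype.card_subtype, Finset.card_univ] at h
    simpa [Nat.card_eq_fintype_card] using (NNRat.cast_le (K := ℝ)).2 h
  have hsplit : (Nat.card {x : Fin k → R // eval x f = 0} : ℝ) +
      Nat.card {x : Fin k → R // eval x f ≠ 0} = Nat.card R ^ k := by
    have h := Nat.card_congr (Equiv.sumCompl fun x : Fin k → R ↦ eval x f = 0)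
    rw [Nat.card_sum, Nat.card_fun, Nat.card_fin] at h
    exact_mod_cast h
  have hpos : (0 : ℝ) < Nat.card R ^ k := by
    have := Nat.card_pos (α := R)
    positivity
  rw [eq_sub_of_add_eq' hsplit, sub_div, div_self hpos.ne']
  gcongr

lemma eventually_map_intCastRingHom_zmod_ne_zero {σ : Type*} {f : MvPolynomial σ ℤ} (hf : f ≠ 0) :
    ∀ᶠ n : ℕ in atTop, map (Int.castRingHom (ZMod n)) f ≠ 0 := by
  obtain ⟨d, hd⟩ := ne_zero_iff.1 hf
  filter_upwards [eventually_gt_atTop (f.coeff d).natAbs] with n hn hmap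
  have hcoeff : ((f.coeff d : ℤ) : ZMod n) = 0 := by
    simpa [coeff_map] using congrArg (coeff d) hmap
  rw [ZMod.intCast_zmod_eq_zero_iff_dvd] at hcoeff
  exact hd (Int.eq_zero_of_dvd_of_natAbs_lt_natAbs hcoeff (by simpa using hn))

lemma psum_ne_zero {σ R : Type*} [Fintype σ] [Nonempty σ] [CommSemiring R] [CharZero R] (n : ℕ) :
    psum σ R n ≠ 0 := by
  intro h
  have heval : (Fintype.card σ : R) = 0 := by simpa [psum] using congrArg (eval 1) h
  exact Fintype.card_ne_zero (Nat.cast_eq_zero.1 heval)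

/-- The number of points of `(ℤ/nℤ)^k` at which the integer polynomial `f` takes a unit value;
it equals `Φ_k(n)` when `f` is the sum of the squares of the variables. -/
noncomputable def unitValueCount {k : ℕ} (f : MvPolynomial (Fin k) ℤ) (n : ℕ) : ℕ :=
  Nat.card {x : Fin k → ZMod n // IsUnit (aeval x f)}

lemma unitValueCount_div_pow_le_one {k : ℕ} (f : MvPolynomial (Fin k) ℤ) (n : ℕ) [NeZero n] :
    (unitValueCount f n : ℝ) / (n : ℝ) ^ k ≤ 1 := by
  have hle : unitValueCount f n ≤ n ^ k := by
    simpa [unitValueCount, Nat.card_fun] using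
      Finite.card_subtype_le fun x : Fin k → ZMod n ↦ IsUnit (aeval x f)
  exact div_le_one_of_le₀ (mod_cast hle) (by positivity)

lemma one_sub_totalDegree_div_le_unitValueCount_div_pow {k p : ℕ} [Fact p.Prime]
    {f : MvPolynomial (Fin k) ℤ} (hf : map (Int.castRingHom (ZMod p)) f ≠ 0) :
    1 - (f.totalDegree : ℝ) / p ≤ unitValueCount f p / (p : ℝ) ^ k := by
  have hcount : unitValueCount f p =
      Nat.card {x : Fin k → ZMod p // eval x (map (Int.castRingHom (ZMod p)) f) ≠ 0} := by
    simp only [unitValueCount, isUnit_iff_ne_zero, eval_map, aeval_def, algebraMap_int_eq]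
  calc
    1 - (f.totalDegree : ℝ) / p
    _ ≤ 1 - ((map (Int.castRingHom (ZMod p)) f).totalDegree : ℝ) / p := by
        gcongr
        exact totalDegree_map_le _ f
    _ ≤ unitValueCount f p / (p : ℝ) ^ k := by
        simpa [hcount] using one_sub_totalDegree_div_card_le_card_eval_ne_zero_div hf

lemma tendsto_unitValueCount_div_pow_primes {k : ℕ} {f : MvPolynomial (Fin k) ℤ} (hf : f ≠ 0) :
    Tendsto (fun n : ℕ ↦ (unitValueCount f n : ℝ) / (n : ℝ) ^ k)
      (atTop ⊓ 𝓟 {p | p.Prime}) (𝓝 1) := by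
  have hlower : Tendsto (fun n : ℕ ↦ 1 - (f.totalDegree : ℝ) / n) atTop (𝓝 1) := by
    simpa using (tendsto_const_div_atTop_nhds_zero_nat (f.totalDegree : ℝ)).const_sub 1
  refine tendsto_of_tendsto_of_tendsto_of_le_of_le' (hlower.mono_left inf_le_left)
    tendsto_const_nhds ?_ ?_ <;> rw [eventually_inf_principal]
  · filter_upwards [eventually_map_intCastRingHom_zmod_ne_zero hf] with p hfp hp
    have : Fact p.Prime := ⟨hp⟩
    exact one_sub_totalDegree_div_le_unitValueCount_div_pow hfp
  · filter_upwards with p hp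
    have : NeZero p := ⟨hp.ne_zero⟩
    exact unitValueCount_div_pow_le_one f p

theorem maximal_order_general {k : ℕ} {f : MvPolynomial (Fin k) ℤ} (hf : f ≠ 0) :
    limsup (fun n : ℕ ↦ (unitValueCount f n : ℝ) / (n : ℝ) ^ k) atTop = 1 := by
  have : (atTop ⊓ 𝓟 {p : ℕ | p.Prime}).NeBot :=
    frequently_mem_iff_neBot.1 (Nat.frequently_atTop_iff_infinite.2 Nat.infinite_setOfPred_prime)
  refine limsup_eq_of_eventually_le_of_tendsto inf_le_left ?_
    (tendsto_unitValueCount_div_pow_primes hf)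
  filter_upwards [eventually_ne_atTop 0] with n hn
  have : NeZero n := ⟨hn⟩
  exact unitValueCount_div_pow_le_one f n

lemma unitValueCount_psum_two (k n : ℕ) :
    unitValueCount (psum (Fin k) ℤ 2) n = genTotient k n := by
  simp [unitValueCount, genTotient, psum]

/-- Theorem 6 (kodd): the maximal order of `Φ_k(n)` is `n^k`. -/
theorem maximal_order (k : ℕ) (hk : 1 ≤ k) :
    Filter.limsup (fun n : ℕ => (genTotient k n : ℝ) / (n : ℝ) ^ k) Filter.atTop = 1 := by
  have : NeZero k := ⟨by omega⟩
  simpa only [unitValueCount_psum_two] using maximal_order_general (psum_ne_zero (σ := Fin k) 2)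
end

section
/- For every odd integer k ≥ 1, the liminferior as n → ∞ of Φ_k(n) · log log n / n^k equals e^{−γ}, where γ is the Euler–Mascheroni constant; that is, the minimal order of Φ_k(n) is e^{−γ} n^k / log log n. -/
open Filter Real

/-!
Modulo an odd prime `p`, the quadratic form `x_1² + ⋯ + x_k²` in an odd number `k` of variables
takes the value `0` exactly `p ^ (k - 1)` times, because the Gauss sums in the usual count carry an
odd power of the quadratic character and cancel; modulo `2` the form is linear and the same holds.
By the Chinese remainder theorem `Φ_k(n) / n ^ k = φ(n) / n`, so the claim is Landau's theorem on
the minimal order of Euler's totient. It follows from Mertens' product theorem: `φ(n) / n` is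
smallest when `n` is a primorial, and the primes dividing `n` beyond `log n` number at most
`log n / log log n`, too few to matter.

The constant in Mertens' theorem is identified by an Abelian argument: the sums `∑_{log p ≤ t} 1/p`
and `∑_{m ≤ t} 1/m` differ by a quantity with a limit, and this limit is read off the behaviour of
`∑ p⁻¹⁻ˢ - ∑ e⁻ˢᵐ / m` as `s → 0⁺`, which is known from the pole of `ζ` at `1`.
-/

open scoped Topology

section FiniteField

variable {F : Type*} [Field F] [Fintype F]

lemma addChar_sum_eq_prod {A M ι : Type*} [AddCommMonoid A] [CommMonoid M] (ψ : AddChar A M)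
    (s : Finset ι) (f : ι → A) : ψ (∑ i ∈ s, f i) = ∏ i ∈ s, ψ (f i) :=
  map_prod ψ.toMonoidHom (fun i ↦ Multiplicative.ofAdd (f i)) s

lemma card_mul_card_zeros_eq_sum_addChar [DecidableEq F] {α : Type*} [Fintype α]
    {ψ : AddChar F ℂ} (hψ : ψ.IsPrimitive) (f : α → F) :
    (Fintype.card F * (Finset.univ.filter fun x ↦ f x = 0).card : ℂ) =
      ∑ t, ∑ x, ψ.mulShift t (f x) := by
  rw [Finset.sum_comm]
  simp only [AddChar.mulShift_apply, AddChar.sum_mulShift _ hψ, Nat.cast_ite, Nat.cast_zero]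
  rw [← Finset.sum_filter, Finset.sum_const, nsmul_eq_mul, mul_comm]

lemma sum_addChar_sq_eq_gaussSum [DecidableEq F] (hF : ringChar F ≠ 2) {ψ : AddChar F ℂ}
    (hψ : ψ ≠ 1) :
    ∑ x, ψ (x ^ 2) = gaussSum ((quadraticChar F).ringHomComp (Int.castRingHom ℂ)) ψ := by
  have card_sqrts (a : F) :
      ((Finset.univ.filter fun x ↦ x ^ 2 = a).card : ℂ) = (quadraticChar F a : ℂ) + 1 := by
    have h := quadraticChar_card_sqrts hF a
    rw [Set.toFinset_ofPred] at h
    exact_mod_cast h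
  calc ∑ x, ψ (x ^ 2)
    _ = ∑ a, ∑ x with x ^ 2 = a, ψ a :=
        (Finset.sum_fiberwise' _ _ _).symm
    _ = ∑ a, ((quadraticChar F a : ℂ) + 1) * ψ a := by
        simp only [Finset.sum_const, nsmul_eq_mul, card_sqrts]
    _ = ∑ a, (quadraticChar F a : ℂ) * ψ a := by
        simp only [add_mul, one_mul, Finset.sum_add_distrib, AddChar.sum_eq_zero_of_ne_one hψ,
          add_zero]

lemma sum_addChar_sq_eq_zero (hF : ringChar F = 2) {ψ : AddChar F ℂ} (hψ : ψ ≠ 1) :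
    ∑ x, ψ (x ^ 2) = 0 := by
  have : CharP F 2 := ringChar.of_eq hF
  rw [← AddChar.sum_eq_zero_of_ne_one hψ]
  exact (bijective_frobenius F 2).sum_comp ψ

lemma sum_pow_sum_addChar_sq {ψ : AddChar F ℂ} (hψ : ψ.IsPrimitive) {k : ℕ} (hk : Odd k) :
    ∑ t, (∑ x, ψ.mulShift t (x ^ 2)) ^ k = (Fintype.card F : ℂ) ^ k := by
  classical
  have zero_term : (∑ x, ψ.mulShift 0 (x ^ 2)) ^ k = (Fintype.card F : ℂ) ^ k := by
    simp [AddChar.mulShift_zero]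
  by_cases hF : ringChar F = 2
  · rw [← zero_term]
    refine Fintype.sum_eq_single 0 fun t ht ↦ ?_
    rw [sum_addChar_sq_eq_zero hF (hψ ht), zero_pow hk.pos.ne']
  · set χ := (quadraticChar F).ringHomComp (Int.castRingHom ℂ)
    have hχ : χ.IsQuadratic := (quadraticChar_isQuadratic F).comp _
    have hχ_ne : χ ≠ 1 :=
      (MulChar.ringHomComp_ne_one_iff Int.cast_injective).2 (quadraticChar_ne_one hF)
    have term (t : F) : (∑ x, ψ.mulShift t (x ^ 2)) ^ k =
        (if t = 0 then (Fintype.card F : ℂ) ^ k else 0) + χ t * gaussSum χ ψ ^ k := by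
      rcases eq_or_ne t 0 with rfl | ht
      · rw [zero_term, if_pos rfl, MulChar.map_zero, zero_mul, add_zero]
      · have shift := gaussSum_mulShift_eq χ ψ (Units.mk0 t ht)
        rw [Units.val_mk0] at shift
        rw [sum_addChar_sq_eq_gaussSum hF (hψ ht), shift, hχ.inv, mul_pow,
          ← MulChar.pow_apply' χ hk.pos.ne', hχ.pow_odd hk, if_neg ht, zero_add]
    simp only [term, Finset.sum_add_distrib, Finset.sum_ite_eq', Finset.mem_univ, if_true,
      ← Finset.sum_mul, MulChar.sum_eq_zero_of_ne_one hχ_ne, zero_mul, add_zero]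

theorem card_mul_card_sum_sq_eq_zero [DecidableEq F] {k : ℕ} (hk : Odd k) :
    Fintype.card F * (Finset.univ.filter fun x : Fin k → F ↦ ∑ i, x i ^ 2 = 0).card =
      Fintype.card F ^ k := by
  have hψ := AddChar.FiniteField.primitiveChar_to_Complex_isPrimitive F
  have h : (Fintype.card F * (Finset.univ.filter fun x : Fin k → F ↦ ∑ i, x i ^ 2 = 0).card : ℂ) =
      (Fintype.card F : ℂ) ^ k := by
    rw [card_mul_card_zeros_eq_sum_addChar hψ, ← sum_pow_sum_addChar_sq hψ hk]
    simp only [Fintype.sum_pow, addChar_sum_eq_prod]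
  exact_mod_cast h

end FiniteField

section Density

/-- The proportion of the `k`-tuples over a finite ring `R` whose sum of squares is a unit. -/
noncomputable def sqSumUnitDensity (k : ℕ) (R : Type*) [CommRing R] : ℝ :=
  Nat.card {x : Fin k → R // IsUnit (∑ i, x i ^ 2)} / Nat.card (Fin k → R)

lemma card_subtype_comp_mul_card {G H : Type*} [AddGroup G] [AddGroup H] [Finite G] {f : G →+ H}
    (hf : Function.Surjective f) (p : H → Prop) :
    Nat.card {x // p (f x)} * Nat.card H = Nat.card {y // p y} * Nat.card G := by
  have card_comp (q : H → Prop) :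
      Nat.card {x // q (f x)} = Nat.card {y // q y} * Nat.card f.ker := by
    rw [← Nat.card_prod]
    refine Nat.card_congr ?_
    exact ((Equiv.sigmaSubtypeFiberEquivSubtype f fun _ ↦ Iff.rfl).symm.trans
      (Equiv.sigmaCongrRight fun y ↦ AddMonoidHom.fiberEquivKerOfSurjective hf y)).trans
      (Equiv.sigmaEquivProd _ _)
  have card_G : Nat.card G = Nat.card H * Nat.card f.ker := by
    simpa only [Nat.card_congr (Equiv.subtypeUnivEquiv fun _ ↦ trivial)] using
      card_comp fun _ ↦ True
  rw [card_comp, card_G]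
  ring

lemma sqSumUnitDensity_eq_of_surjective (k : ℕ) {R S : Type*} [CommRing R] [CommRing S] [Finite R]
    (f : R →+* S) [IsLocalHom f] (hf : Function.Surjective f) :
    sqSumUnitDensity k R = sqSumUnitDensity k S := by
  have : Finite S := Finite.of_surjective f hf
  have h := card_subtype_comp_mul_card (f := f.toAddMonoidHom.compLeft (Fin k))
    (hf.comp_left) fun y ↦ IsUnit (∑ i, y i ^ 2)
  have isUnit_iff (x : Fin k → R) :
      IsUnit (∑ i, f.toAddMonoidHom.compLeft (Fin k) x i ^ 2) ↔ IsUnit (∑ i, x i ^ 2) := by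
    rw [← isUnit_map_iff f, map_sum]
    simp only [map_pow]
    rfl
  simp only [isUnit_iff] at h
  rw [sqSumUnitDensity, sqSumUnitDensity, div_eq_div_iff (by exact_mod_cast Nat.card_pos.ne')
    (by exact_mod_cast Nat.card_pos.ne')]
  exact_mod_cast h

lemma sqSumUnitDensity_pi (k : ℕ) {κ : Type*} [Fintype κ] (R : κ → Type*)
    [∀ j, CommRing (R j)] :
    sqSumUnitDensity k (∀ j, R j) = ∏ j, sqSumUnitDensity k (R j) := by
  simp only [sqSumUnitDensity, Finset.prod_div_distrib, ← Nat.cast_prod, ← Nat.card_pi]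
  congr 2
  · refine Nat.card_congr (((Equiv.piComm _).subtypeEquiv fun x ↦ ?_).trans
      Equiv.subtypePiEquivPi)
    simp only [Pi.isUnit_iff, Finset.sum_apply, Pi.pow_apply]
    rfl
  · exact Nat.card_congr (Equiv.piComm _)

lemma sqSumUnitDensity_eq_prod_quotient (k : ℕ) (R : Type*) [CommRing R] [Finite R]
    [Fintype (MaximalSpectrum R)] :
    sqSumUnitDensity k R = ∏ m : MaximalSpectrum R, sqSumUnitDensity k (R ⧸ m.asIdeal) := by
  let f : R →+* ∀ m : MaximalSpectrum R, R ⧸ m.asIdeal :=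
    RingHom.pi fun m ↦ Ideal.Quotient.mk m.asIdeal
  have hf : Function.Surjective f :=
    (IsArtinianRing.quotNilradicalEquivPi R).surjective.comp Ideal.Quotient.mk_surjective
  have : IsLocalHom f := by
    refine ⟨fun x hx ↦ of_not_not fun hx' ↦ ?_⟩
    obtain ⟨m, hm, hxm⟩ := exists_max_ideal_of_mem_nonunits hx'
    exact (Pi.isUnit_iff.1 hx ⟨m, hm⟩).ne_zero (Ideal.Quotient.eq_zero_iff_mem.2 hxm)
  rw [sqSumUnitDensity_eq_of_surjective k f hf, sqSumUnitDensity_pi]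

lemma sqSumUnitDensity_field {F : Type*} [Field F] [Finite F] {k : ℕ} (hk : Odd k) :
    sqSumUnitDensity k F = 1 - 1 / Nat.card F := by
  classical
  have := Fintype.ofFinite F
  have hzeros := card_mul_card_sum_sq_eq_zero (F := F) hk
  have hcompl := Finset.card_filter_add_card_filter_not (s := Finset.univ)
    fun x : Fin k → F ↦ ∑ i, x i ^ 2 = 0
  rw [Finset.card_univ, Fintype.card_fun, Fintype.card_fin] at hcompl
  simp only [sqSumUnitDensity, isUnit_iff_ne_zero, Nat.card_eq_fintype_card, Fintype.card_subtype,
    Fintype.card_fun, Fintype.card_fin]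
  have hq : (Fintype.card F : ℝ) ≠ 0 := by simp
  rify at hzeros hcompl ⊢
  field_simp
  linear_combination (Fintype.card F : ℝ) * hcompl - hzeros

lemma sqSumUnitDensity_one (R : Type*) [CommRing R] :
    sqSumUnitDensity 1 R = Nat.card Rˣ / Nat.card R := by
  have isUnit_iff (x : Fin 1 → R) : IsUnit (∑ i, x i ^ 2) ↔ IsUnit (x 0) := by
    rw [Fin.sum_univ_one, isUnit_pow_iff two_ne_zero]
  rw [sqSumUnitDensity, Nat.card_congr (Equiv.funUnique (Fin 1) R),
    Nat.card_congr (Equiv.subtypeEquiv (Equiv.funUnique (Fin 1) R) isUnit_iff),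
    Nat.card_congr (Submonoid.unitsTypeEquivIsUnitSubmonoid (M := R)).toEquiv]
  rfl

theorem sqSumUnitDensity_of_odd (R : Type*) [CommRing R] [Finite R] {k : ℕ} (hk : Odd k) :
    sqSumUnitDensity k R = Nat.card Rˣ / Nat.card R := by
  have := Fintype.ofFinite (MaximalSpectrum R)
  rw [← sqSumUnitDensity_one, sqSumUnitDensity_eq_prod_quotient k,
    sqSumUnitDensity_eq_prod_quotient 1]
  refine Finset.prod_congr rfl fun m _ ↦ ?_
  let := Ideal.Quotient.field m.asIdeal
  have : Finite (R ⧸ m.asIdeal) := Finite.of_surjective _ Ideal.Quotient.mk_surjective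
  rw [sqSumUnitDensity_field hk, sqSumUnitDensity_field odd_one]

theorem genTotient_div_pow {k : ℕ} (hk : Odd k) {n : ℕ} (hn : n ≠ 0) :
    (genTotient k n : ℝ) / n ^ k = n.totient / n := by
  have : NeZero n := ⟨hn⟩
  simpa [sqSumUnitDensity, genTotient, ZMod.card_units_eq_totient] using
    sqSumUnitDensity_of_odd (ZMod n) hk

end Density

section Mertens

open scoped ArithmeticFunction.vonMangoldt

lemma sum_vonMangoldt_mul_floorDiv (N : ℕ) :
    ∑ n ∈ Finset.Ioc 0 N, Λ n * (N / n : ℕ) = log N.factorial := by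
  rw [← ArithmeticFunction.sum_Ioc_mul_zeta_eq_sum, ArithmeticFunction.vonMangoldt_mul_zeta,
    ← Finset.prod_Ico_id_eq_factorial, Nat.cast_prod,
    log_prod fun n hn ↦ Nat.cast_ne_zero.2 (Nat.pos_iff_ne_zero.1 (Finset.mem_Ico.1 hn).1)]
  rfl

lemma log_factorial_le (N : ℕ) : log N.factorial ≤ N * log N := by
  rw [← log_pow]
  exact log_le_log (by positivity) (by exact_mod_cast Nat.factorial_le_pow N)

lemma mul_log_sub_self_le_log_factorial {N : ℕ} (hN : N ≠ 0) :
    N * log N - N ≤ log N.factorial := by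
  have h := log_le_log (by positivity) (pow_div_factorial_le_exp (N : ℝ) (by positivity) N)
  rw [log_div (by positivity) (by positivity), log_pow, log_exp] at h
  linarith

lemma abs_sum_vonMangoldt_div_sub_log_le {N : ℕ} (hN : N ≠ 0) :
    |∑ n ∈ Finset.Ioc 0 N, Λ n / n - log N| ≤ log 4 + 4 := by
  have hN0 : (0 : ℝ) < N := by positivity
  have lower : N * (log N - 1) ≤ N * ∑ n ∈ Finset.Ioc 0 N, Λ n / n :=
    calc N * (log N - 1)
      _ ≤ log N.factorial := by linarith [mul_log_sub_self_le_log_factorial hN]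
      _ ≤ N * ∑ n ∈ Finset.Ioc 0 N, Λ n / n := by
        rw [← sum_vonMangoldt_mul_floorDiv, Finset.mul_sum]
        refine Finset.sum_le_sum fun n _ ↦ ?_
        rw [mul_div_left_comm]
        exact mul_le_mul_of_nonneg_left Nat.cast_div_le ArithmeticFunction.vonMangoldt_nonneg
  have upper : N * ∑ n ∈ Finset.Ioc 0 N, Λ n / n ≤ N * (log N + (log 4 + 4)) :=
    calc N * ∑ n ∈ Finset.Ioc 0 N, Λ n / n
      _ ≤ ∑ n ∈ Finset.Ioc 0 N, (Λ n * (N / n : ℕ) + Λ n) := by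
        rw [Finset.mul_sum]
        refine Finset.sum_le_sum fun n _ ↦ ?_
        rw [mul_div_left_comm, ← mul_add_one, ← Nat.floor_div_eq_div (K := ℝ)]
        exact mul_le_mul_of_nonneg_left (Nat.lt_floor_add_one _).le
          ArithmeticFunction.vonMangoldt_nonneg
      _ = log N.factorial + Chebyshev.psi N := by
        rw [Finset.sum_add_distrib, sum_vonMangoldt_mul_floorDiv, Chebyshev.psi, Nat.floor_natCast]
      _ ≤ N * (log N + (log 4 + 4)) := by
        linarith [log_factorial_le N, Chebyshev.psi_le_const_mul_self hN0.le]
  rw [abs_sub_le_iff]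
  constructor <;>
    linarith [le_of_mul_le_mul_left lower hN0, le_of_mul_le_mul_left upper hN0,
      log_nonneg (show (1 : ℝ) ≤ 4 by norm_num)]

lemma exists_abs_sum_primesLE_log_div_sub_log_le :
    ∃ C : ℝ, ∀ N : ℕ, N ≠ 0 → |∑ p ∈ N.primesLE, log p / p - log N| ≤ C := by
  set f : ℕ → ℝ := fun n ↦ (if n.Prime then 0 else Λ n) / n
  have f_nonneg (n : ℕ) : 0 ≤ f n := by
    unfold f
    split_ifs
    · simp
    · exact div_nonneg ArithmeticFunction.vonMangoldt_nonneg n.cast_nonneg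
  have f_summable : Summable f := by
    simpa [f, Subsingleton.elim _ (0 : ZMod 1)] using
      ArithmeticFunction.vonMangoldt.summable_residueClass_non_primes_div (0 : ZMod 1)
  refine ⟨log 4 + 4 + ∑' n, f n, fun N hN ↦ ?_⟩
  have split : ∑ n ∈ Finset.Ioc 0 N, Λ n / n =
      ∑ p ∈ N.primesLE, log p / p + ∑ n ∈ Finset.Ioc 0 N, f n := by
    rw [Nat.primesLE_eq_filter_Ioc_zero, Finset.sum_filter, ← Finset.sum_add_distrib]
    refine Finset.sum_congr rfl fun n _ ↦ ?_
    by_cases hn : n.Prime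
    · simp [f, hn, ArithmeticFunction.vonMangoldt_apply_prime]
    · simp [f, hn]
  have tail_le : ∑ n ∈ Finset.Ioc 0 N, f n ≤ ∑' n, f n :=
    f_summable.sum_le_tsum _ fun n _ ↦ f_nonneg n
  have tail_nonneg : 0 ≤ ∑ n ∈ Finset.Ioc 0 N, f n := Finset.sum_nonneg fun n _ ↦ f_nonneg n
  have h := abs_sum_vonMangoldt_div_sub_log_le hN
  rw [split] at h
  rw [abs_le] at h ⊢
  constructor <;> linarith

end Mertens

section PartialSummation

variable {L W : ℕ → ℝ} {B C : ℝ}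

lemma summable_log_sub_log_sub_div (hL : Monotone L) (hpos : ∀ n, 0 < L n)
    (hB : ∀ n, L (n + 1) - L n ≤ B) :
    Summable fun n ↦ log (L (n + 1)) - log (L n) - (L (n + 1) - L n) / L (n + 1) := by
  have hB0 : 0 ≤ B := (sub_nonneg.2 (hL (Nat.le_succ 0))).trans (hB 0)
  have log_sub (n : ℕ) : log (L (n + 1)) - log (L n) = log (L (n + 1) / L n) :=
    (log_div (hpos _).ne' (hpos n).ne').symm
  have ratio_pos (n : ℕ) : 0 < L (n + 1) / L n := div_pos (hpos _) (hpos n)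
  refine summable_of_sum_range_le (c := B * (L 0)⁻¹) (fun n ↦ ?_) fun n ↦ ?_
  · have h := one_sub_inv_le_log_of_pos (ratio_pos n)
    rw [inv_div] at h
    rw [log_sub, sub_div, div_self (hpos _).ne']
    linarith
  have term_le (i : ℕ) : log (L (i + 1)) - log (L i) - (L (i + 1) - L i) / L (i + 1) ≤
      B * ((L i)⁻¹ - (L (i + 1))⁻¹) := by
    have hi := (hpos i).ne'
    have hi' := (hpos (i + 1)).ne'
    calc log (L (i + 1)) - log (L i) - (L (i + 1) - L i) / L (i + 1)
      _ ≤ L (i + 1) / L i - 1 - (L (i + 1) - L i) / L (i + 1) := by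
        rw [log_sub]
        linarith [log_le_sub_one_of_pos (ratio_pos i)]
      _ = (L (i + 1) - L i) * ((L i)⁻¹ - (L (i + 1))⁻¹) := by
        field_simp
      _ ≤ B * ((L i)⁻¹ - (L (i + 1))⁻¹) :=
        mul_le_mul_of_nonneg_right (hB i) <|
          sub_nonneg.2 (inv_anti₀ (hpos i) (hL (Nat.le_succ i)))
  refine (Finset.sum_le_sum fun i _ ↦ term_le i).trans ?_
  rw [← Finset.mul_sum, Finset.sum_range_sub']
  exact mul_le_mul_of_nonneg_left (sub_le_self _ (inv_pos.2 (hpos n)).le) hB0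

lemma exists_tendsto_sum_div_sub_log (hL : Monotone L) (hpos : ∀ n, 0 < L n)
    (hB : ∀ n, L (n + 1) - L n ≤ B) (htop : Tendsto L atTop atTop) (hW : ∀ n, |W n - L n| ≤ C) :
    ∃ c, Tendsto (fun n ↦ ∑ i ∈ Finset.range n, (W (i + 1) - W i) / L (i + 1) - log (L n))
      atTop (𝓝 c) := by
  set R : ℕ → ℝ := fun n ↦ W n - L n
  have dirichlet : CauchySeq fun n ↦
      ∑ i ∈ Finset.range n, (L (i + 1))⁻¹ • (R (i + 1) - R i) := by
    refine Antitone.cauchySeq_series_mul_of_tendsto_zero_of_bounded (b := C + C)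
      (fun i j hij ↦ inv_anti₀ (hpos _) (hL (by lia)))
      ((htop.comp (tendsto_add_atTop_nat 1)).inv_tendsto_atTop) fun n ↦ ?_
    rw [Finset.sum_range_sub]
    exact (norm_sub_le _ _).trans (add_le_add (hW n) (hW 0))
  obtain ⟨l, hl⟩ := cauchySeq_tendsto_of_complete dirichlet
  have smooth := (summable_log_sub_log_sub_div hL hpos hB).hasSum.tendsto_sum_nat
  refine ⟨_, ((hl.sub smooth).sub_const (log (L 0))).congr fun n ↦ ?_⟩
  have decompose : ∑ i ∈ Finset.range n, (W (i + 1) - W i) / L (i + 1) =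
      ∑ i ∈ Finset.range n, (L (i + 1))⁻¹ • (R (i + 1) - R i) -
        ∑ i ∈ Finset.range n, (log (L (i + 1)) - log (L i) - (L (i + 1) - L i) / L (i + 1)) +
        (log (L n) - log (L 0)) := by
    rw [← Finset.sum_range_sub (fun i ↦ log (L i)), ← Finset.sum_sub_distrib,
      ← Finset.sum_add_distrib]
    refine Finset.sum_congr rfl fun i _ ↦ ?_
    simp only [R, smul_eq_mul]
    ring
  rw [decompose]
  ring

end PartialSummation

lemma sum_primesLE_succ (f : ℕ → ℝ) (N : ℕ) :
    ∑ p ∈ (N + 1).primesLE, f p =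
      ∑ p ∈ N.primesLE, f p + if (N + 1).Prime then f (N + 1) else 0 := by
  rw [Nat.primesLE_succ]
  split_ifs
  · rw [Finset.sum_insert N.notMem_primesLE, add_comm]
  · rw [add_zero]

theorem exists_tendsto_sum_primesLE_inv_sub_log_log :
    ∃ c : ℝ, Tendsto (fun N : ℕ ↦ ∑ p ∈ N.primesLE, (p : ℝ)⁻¹ - log (log N)) atTop (𝓝 c) := by
  obtain ⟨C, hC⟩ := exists_abs_sum_primesLE_log_div_sub_log_le
  set L : ℕ → ℝ := fun n ↦ log (n + 2 : ℕ)
  set W : ℕ → ℝ := fun n ↦ ∑ p ∈ (n + 2).primesLE, log p / p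
  have hpos (n : ℕ) : 0 < L n := log_pos (by norm_cast; lia)
  have hmono : Monotone L := fun m n hmn ↦ log_le_log (by positivity) (by gcongr)
  have hstep (n : ℕ) : L (n + 1) - L n ≤ 1 := by
    have ratio_le : ((n + 1 + 2 : ℕ) : ℝ) / (n + 2 : ℕ) ≤ 2 := by
      rw [div_le_iff₀ (by positivity)]
      norm_cast
      lia
    have h := log_le_sub_one_of_pos (x := ((n + 1 + 2 : ℕ) : ℝ) / (n + 2 : ℕ)) (by positivity)
    rw [log_div (by positivity) (by positivity)] at h
    linarith
  have htop : Tendsto L atTop atTop :=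
    tendsto_log_atTop.comp (tendsto_natCast_atTop_atTop.comp (tendsto_add_atTop_nat 2))
  obtain ⟨c, hc⟩ := exists_tendsto_sum_div_sub_log hmono hpos hstep htop
    (W := W) fun n ↦ hC (n + 2) (by lia)
  refine ⟨_, (tendsto_add_atTop_iff_nat 2).1 ((hc.add_const (1 / 2)).congr fun n ↦ ?_)⟩
  have inv_sum (n : ℕ) : ∑ i ∈ Finset.range n, (W (i + 1) - W i) / L (i + 1) + 1 / 2 =
      ∑ p ∈ (n + 2).primesLE, (p : ℝ)⁻¹ := by
    induction n with
    | zero => simp [show Nat.primesLE 2 = {2} by decide]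
    | succ n ih =>
      have hW : W (n + 1) = W n + _ := sum_primesLE_succ _ (n + 2)
      have hlog : log (n + 2 + 1 : ℕ) ≠ 0 := (hpos (n + 1)).ne'
      rw [Finset.sum_range_succ, add_right_comm, ih, hW, add_sub_cancel_left,
        sum_primesLE_succ _ (n + 2)]
      split_ifs
      · rw [div_right_comm, div_self hlog, one_div]
      · rw [zero_div]
  rw [← inv_sum]
  ring

section EulerProduct

/-- The function `x ↦ x²/2 + x³/3 + ⋯`, by which a logarithmic Euler product `∑ -log (1 - x)`
differs from its leading part `∑ x`. -/
noncomputable def negLogTail (x : ℝ) : ℝ := -log (1 - x) - x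

lemma abs_negLogTail_le {x : ℝ} (hx : |x| ≤ 1 / 2) : |negLogTail x| ≤ 2 * x ^ 2 := by
  calc |negLogTail x|
    _ = |∑ i ∈ Finset.range 1, x ^ (i + 1) / (i + 1) + log (1 - x)| := by
      rw [negLogTail, ← abs_neg]
      simp
    _ ≤ |x| ^ 2 / (1 - |x|) := abs_log_sub_add_sum_range_le (by linarith) 1
    _ ≤ 2 * x ^ 2 := by
      rw [sq_abs, div_le_iff₀ (by linarith)]
      nlinarith [sq_nonneg x]

lemma norm_negLogTail_rpow_le (p : Nat.Primes) {s : ℝ} (hs : 0 ≤ s) :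
    ‖negLogTail ((p : ℝ) ^ (-(1 + s)))‖ ≤ 2 * (p : ℝ) ^ (-2 : ℝ) := by
  have two_le : (2 : ℝ) ≤ p := by exact_mod_cast p.2.two_le
  have pos : 0 < (p : ℝ) ^ (-(1 + s)) := by positivity
  have le_inv : (p : ℝ) ^ (-(1 + s)) ≤ (p : ℝ)⁻¹ := by
    rw [← rpow_neg_one]
    exact rpow_le_rpow_of_exponent_le (by linarith) (by linarith)
  have inv_le : (p : ℝ)⁻¹ ≤ 1 / 2 := by
    rw [one_div]
    exact inv_anti₀ two_pos two_le
  calc ‖negLogTail ((p : ℝ) ^ (-(1 + s)))‖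
    _ ≤ 2 * ((p : ℝ) ^ (-(1 + s))) ^ 2 :=
      abs_negLogTail_le (by rw [abs_of_pos pos]; exact le_inv.trans inv_le)
    _ ≤ 2 * (p : ℝ)⁻¹ ^ 2 := by gcongr
    _ = 2 * (p : ℝ) ^ (-2 : ℝ) := by rw [rpow_neg (by positivity), rpow_two, inv_pow]

lemma summable_two_mul_primes_rpow_neg_two :
    Summable fun p : Nat.Primes ↦ 2 * (p : ℝ) ^ (-2 : ℝ) :=
  (Nat.Primes.summable_rpow.2 (by norm_num)).mul_left 2

lemma summable_negLogTail_rpow {s : ℝ} (hs : 0 ≤ s) :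
    Summable fun p : Nat.Primes ↦ negLogTail ((p : ℝ) ^ (-(1 + s))) :=
  .of_norm_bounded summable_two_mul_primes_rpow_neg_two fun p ↦ norm_negLogTail_rpow_le p hs

lemma tendsto_tsum_negLogTail_rpow :
    Tendsto (fun s : ℝ ↦ ∑' p : Nat.Primes, negLogTail ((p : ℝ) ^ (-(1 + s)))) (𝓝[>] 0)
      (𝓝 (∑' p : Nat.Primes, negLogTail (p : ℝ)⁻¹)) := by
  refine tendsto_tsum_of_dominated_convergence summable_two_mul_primes_rpow_neg_two (fun p ↦ ?_) ?_
  · have one_lt : (1 : ℝ) < p := by exact_mod_cast p.2.one_lt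
    have hrpow : Tendsto (fun s : ℝ ↦ (p : ℝ) ^ (-(1 + s))) (𝓝[>] 0) (𝓝 (p : ℝ)⁻¹) := by
      have h : Continuous fun s : ℝ ↦ (p : ℝ) ^ (-(1 + s)) :=
        continuous_const.rpow (by fun_prop) fun _ ↦ .inl (by positivity)
      simpa [rpow_neg_one] using (h.tendsto 0).mono_left nhdsWithin_le_nhds
    have ne_zero : 1 - (p : ℝ)⁻¹ ≠ 0 := (sub_pos.2 (inv_lt_one_of_one_lt₀ one_lt)).ne'
    exact ((hrpow.const_sub 1).log ne_zero).neg.sub hrpow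
  · filter_upwards [self_mem_nhdsWithin] with s hs p
    exact norm_negLogTail_rpow_le p (le_of_lt hs)

lemma exp_tsum_neg_log_eq_norm_riemannZeta {s : ℝ} (hs : 0 < s) :
    exp (∑' p : Nat.Primes, -log (1 - (p : ℝ) ^ (-(1 + s)))) = ‖riemannZeta (1 + s)‖ := by
  have lt_one (p : Nat.Primes) : (p : ℝ) ^ (-(1 + s)) < 1 :=
    rpow_lt_one_of_one_lt_of_neg (by exact_mod_cast p.2.one_lt) (by linarith)
  have h : (∑' p : Nat.Primes, -Complex.log (1 - (p : ℂ) ^ (-(1 + s : ℂ)))) =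
      (∑' p : Nat.Primes, -log (1 - (p : ℝ) ^ (-(1 + s))) : ℝ) := by
    rw [Complex.ofReal_tsum]
    refine tsum_congr fun p ↦ ?_
    rw [Complex.ofReal_neg, Complex.ofReal_log (sub_nonneg.2 (lt_one p).le), Complex.ofReal_sub,
      Complex.ofReal_cpow (by positivity)]
    push_cast
    rfl
  rw [← riemannZeta_eulerProduct_exp_log (by simpa using hs), h, ← Complex.ofReal_exp,
    Complex.norm_real, norm_of_nonneg (exp_pos _).le]

lemma tendsto_tsum_neg_log_add_log :
    Tendsto (fun s : ℝ ↦ ∑' p : Nat.Primes, -log (1 - (p : ℝ) ^ (-(1 + s))) + log s) (𝓝[>] 0)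
      (𝓝 0) := by
  have hshift : Tendsto (fun s : ℝ ↦ (1 + s : ℂ)) (𝓝[>] 0) (𝓝[≠] 1) := by
    refine tendsto_nhdsWithin_iff.2 ⟨?_, ?_⟩
    · have h : Continuous fun s : ℝ ↦ (1 + s : ℂ) := by fun_prop
      simpa using (h.tendsto 0).mono_left nhdsWithin_le_nhds
    · filter_upwards [self_mem_nhdsWithin] with s hs
      simpa using (ne_of_gt hs : s ≠ 0)
  have hzeta := ((riemannZeta_residue_one.comp hshift).norm.log (by simp))
  rw [norm_one, log_one] at hzeta
  refine hzeta.congr' ?_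
  filter_upwards [self_mem_nhdsWithin] with s hs
  have hs0 : 0 < s := hs
  rw [Function.comp_apply, norm_mul, ← exp_tsum_neg_log_eq_norm_riemannZeta hs0,
    add_sub_cancel_left, Complex.norm_real, norm_of_nonneg hs0.le,
    log_mul hs0.ne' (exp_ne_zero _), log_exp, add_comm]

lemma tendsto_tsum_primes_rpow_add_log :
    Tendsto (fun s : ℝ ↦ ∑' p : Nat.Primes, (p : ℝ) ^ (-(1 + s)) + log s) (𝓝[>] 0)
      (𝓝 (-∑' p : Nat.Primes, negLogTail (p : ℝ)⁻¹)) := by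
  have h := tendsto_tsum_neg_log_add_log.sub tendsto_tsum_negLogTail_rpow
  rw [zero_sub] at h
  refine h.congr' ?_
  filter_upwards [self_mem_nhdsWithin] with s hs
  have hs0 : 0 < s := hs
  have split := (summable_negLogTail_rpow hs0.le).tsum_add
    (Nat.Primes.summable_rpow.2 (show -(1 + s) < -1 by linarith))
  simp only [negLogTail, sub_add_cancel] at split ⊢
  rw [split]
  ring

end EulerProduct

section AbelianTheorem

open MeasureTheory

/-- The summatory function `t ↦ ∑_{ℓ i ≤ t} a i` of the generalized Dirichlet series
`s ↦ ∑ i, a i * exp (-(s * ℓ i))`. -/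
noncomputable def summatory {ι : Type*} (a ℓ : ι → ℝ) (t : ℝ) : ℝ :=
  ∑' i, if ℓ i ≤ t then a i else 0

lemma exp_neg_mul_ite_eq_indicator (c l : ℝ) {s : ℝ} (hs : 0 < s) :
    (fun u : ℝ ↦ exp (-u) * if l ≤ u / s then c else 0) =
      (Set.Ici (s * l)).indicator fun u ↦ exp (-u) * c := by
  ext u
  simp only [Set.indicator_apply, Set.mem_Ici, le_div_iff₀' hs, mul_ite, mul_zero]

lemma integrableOn_exp_neg_mul_ite (c l : ℝ) {s : ℝ} (hs : 0 < s) :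
    IntegrableOn (fun u ↦ exp (-u) * if l ≤ u / s then c else 0) (Set.Ioi 0) := by
  rw [exp_neg_mul_ite_eq_indicator c l hs]
  exact ((integrableOn_exp_neg_Ioi 0).mul_const c).indicator measurableSet_Ici

lemma integral_exp_neg_mul_ite (c : ℝ) {l s : ℝ} (hl : 0 ≤ l) (hs : 0 < s) :
    ∫ u in Set.Ioi 0, exp (-u) * (if l ≤ u / s then c else 0) = c * exp (-(s * l)) := by
  have inter_ae : (Set.Ioi 0 ∩ Set.Ici (s * l) : Set ℝ) =ᵐ[volume] Set.Ioi (s * l) := by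
    have h := (EventuallyEq.refl (ae volume) (Set.Ioi (0 : ℝ))).inter
      (Ioi_ae_eq_Ici (μ := volume) (a := s * l)).symm
    rwa [Set.Ioi_inter_Ioi, max_eq_right (by positivity)] at h
  rw [exp_neg_mul_ite_eq_indicator c l hs, setIntegral_indicator measurableSet_Ici,
    setIntegral_congr_set inter_ae, integral_mul_const, integral_exp_neg_Ioi, mul_comm]

variable {ι : Type*} {a ℓ : ι → ℝ}

lemma norm_ite_le_exp_mul (i : ι) (t : ℝ) :
    ‖if ℓ i ≤ t then a i else 0‖ ≤ exp t * ‖a i * exp (-ℓ i)‖ := by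
  split_ifs with h
  · rw [norm_mul, norm_of_nonneg (exp_pos _).le, mul_left_comm, ← exp_add]
    exact le_mul_of_one_le_right (norm_nonneg _) (one_le_exp (by linarith))
  · rw [norm_zero]
    positivity

lemma summable_ite_le (ha : Summable fun i ↦ a i * exp (-ℓ i)) (t : ℝ) :
    Summable fun i ↦ if ℓ i ≤ t then a i else 0 :=
  .of_norm_bounded (ha.norm.mul_left (exp t)) fun i ↦ norm_ite_le_exp_mul i t

lemma norm_summatory_le (ha : Summable fun i ↦ a i * exp (-ℓ i)) (t : ℝ) :
    ‖summatory a ℓ t‖ ≤ exp t * ∑' i, ‖a i * exp (-ℓ i)‖ := by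
  rw [← tsum_mul_left]
  exact tsum_of_norm_bounded (ha.norm.mul_left (exp t)).hasSum fun i ↦ norm_ite_le_exp_mul i t

lemma measurable_summatory [Countable ι] (ha : Summable fun i ↦ a i * exp (-ℓ i)) :
    Measurable (summatory a ℓ) := by
  refine measurable_of_tendsto_metrizable'
    (f := fun (S : Finset ι) t ↦ ∑ i ∈ S, if ℓ i ≤ t then a i else 0) atTop (fun S ↦ ?_) <|
    tendsto_pi_nhds.2 fun t ↦ (summable_ite_le ha t).hasSum
  exact Finset.measurable_fun_sum S fun i _ ↦
    Measurable.ite measurableSet_Ici measurable_const measurable_const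

lemma exists_forall_norm_summatory_le {d : ℝ} (ha : Summable fun i ↦ a i * exp (-ℓ i))
    (hd : Tendsto (summatory a ℓ) atTop (𝓝 d)) : ∃ K, ∀ t, ‖summatory a ℓ t‖ ≤ K := by
  obtain ⟨T, hT⟩ := eventually_atTop.1 (hd.norm.eventually_le_const (lt_add_one ‖d‖))
  refine ⟨max (‖d‖ + 1) (exp T * ∑' i, ‖a i * exp (-ℓ i)‖), fun t ↦ ?_⟩
  rcases le_total T t with h | h
  · exact (hT t h).trans (le_max_left _ _)
  · refine (norm_summatory_le ha t).trans (le_max_of_le_right ?_)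
    gcongr

lemma integral_exp_neg_mul_summatory [Countable ι] (hℓ : ∀ i, 0 ≤ ℓ i) {s : ℝ} (hs : 0 < s)
    (ha : Summable fun i ↦ a i * exp (-(s * ℓ i))) :
    ∫ u in Set.Ioi 0, exp (-u) * summatory a ℓ (u / s) = ∑' i, a i * exp (-(s * ℓ i)) := by
  have norm_ite (i : ι) (u : ℝ) : ‖exp (-u) * if ℓ i ≤ u / s then a i else 0‖ =
      exp (-u) * if ℓ i ≤ u / s then ‖a i‖ else 0 := by
    rw [norm_mul, norm_of_nonneg (exp_pos _).le, apply_ite norm, norm_zero]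
  have h := hasSum_integral_of_summable_integral_norm
    (F := fun i u ↦ exp (-u) * if ℓ i ≤ u / s then a i else 0)
    (fun i ↦ integrableOn_exp_neg_mul_ite (a i) (ℓ i) hs) <| by
      simp only [norm_ite, integral_exp_neg_mul_ite _ (hℓ _) hs]
      simpa only [norm_mul, norm_of_nonneg (exp_pos _).le] using ha.norm
  simp only [integral_exp_neg_mul_ite _ (hℓ _) hs, tsum_mul_left] at h
  exact h.tsum_eq.symm

/-- The idea is to write the series as the Laplace transform `∫ e⁻ᵘ A(u / s) du` of its summatory
function `A`. -/
theorem tendsto_tsum_mul_exp_of_tendsto_summatory [Countable ι] {d : ℝ} (hℓ : ∀ i, 0 ≤ ℓ i)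
    (ha : ∀ s > 0, Summable fun i ↦ a i * exp (-(s * ℓ i)))
    (hd : Tendsto (summatory a ℓ) atTop (𝓝 d)) :
    Tendsto (fun s ↦ ∑' i, a i * exp (-(s * ℓ i))) (𝓝[>] 0) (𝓝 d) := by
  have ha_one : Summable fun i ↦ a i * exp (-ℓ i) := by simpa using ha 1 one_pos
  obtain ⟨K, hK⟩ := exists_forall_norm_summatory_le ha_one hd
  have h : Tendsto (fun s ↦ ∫ u in Set.Ioi 0, exp (-u) * summatory a ℓ (u / s)) (𝓝[>] 0)
      (𝓝 (∫ u in Set.Ioi 0, exp (-u) * d)) := by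
    refine tendsto_integral_filter_of_dominated_convergence (fun u ↦ exp (-u) * K)
      (.of_forall fun s ↦ ?_) (.of_forall fun s ↦ .of_forall fun u ↦ ?_)
      ((integrableOn_exp_neg_Ioi 0).mul_const K) ?_
    · have := (measurable_summatory ha_one).comp (measurable_id.div_const s)
      exact (Measurable.mul (by fun_prop) this).aestronglyMeasurable
    · rw [norm_mul, norm_of_nonneg (exp_pos _).le]
      exact mul_le_mul_of_nonneg_left (hK _) (exp_pos _).le
    · filter_upwards [ae_restrict_mem measurableSet_Ioi] with u hu
      refine (hd.comp ?_).const_mul _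
      exact (tendsto_inv_nhdsGT_zero.const_mul_atTop hu).congr fun s ↦ (div_eq_mul_inv u s).symm
  rw [integral_mul_const, integral_exp_neg_Ioi_zero, one_mul] at h
  refine h.congr' ?_
  filter_upwards [self_mem_nhdsWithin] with s hs
  exact integral_exp_neg_mul_summatory hℓ hs (ha s hs)

end AbelianTheorem

section MertensConstant

lemma inv_mul_exp_neg_mul_log {x : ℝ} (hx : 0 < x) (s : ℝ) :
    x⁻¹ * exp (-(s * log x)) = x ^ (-(1 + s)) := by
  rw [← rpow_neg_one, rpow_def_of_pos hx, rpow_def_of_pos hx, ← exp_add]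
  ring_nf

lemma hasSum_inv_succ_mul_exp {s : ℝ} (hs : 0 < s) :
    HasSum (fun n : ℕ ↦ (n + 1 : ℝ)⁻¹ * exp (-(s * (n + 1)))) (-log (1 - exp (-s))) := by
  have h := hasSum_pow_div_log_of_abs_lt_one (x := exp (-s)) <| by
    rw [abs_of_pos (exp_pos _)]
    exact exp_lt_one_iff.2 (by linarith)
  convert h using 2 with n
  rw [← exp_nat_mul, div_eq_inv_mul]
  push_cast
  ring_nf

lemma tendsto_log_one_sub_exp_neg_sub_log :
    Tendsto (fun s : ℝ ↦ log (1 - exp (-s)) - log s) (𝓝[>] 0) (𝓝 0) := by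
  have hderiv : HasDerivAt (fun s : ℝ ↦ 1 - exp (-s)) 1 0 := by
    simpa using ((hasDerivAt_id (0 : ℝ)).neg.exp).const_sub 1
  have h := hderiv.tendsto_slope_zero_right.log one_ne_zero
  simp only [zero_add, log_one, neg_zero, exp_zero, sub_self, sub_zero, smul_eq_mul] at h
  refine h.congr' ?_
  filter_upwards [self_mem_nhdsWithin] with s hs
  have hs0 : 0 < s := hs
  rw [log_mul (by positivity) (sub_pos.2 (exp_lt_one_iff.2 (by linarith))).ne', log_inv]
  ring

lemma summatory_primes_inv_log (t : ℝ) :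
    summatory (fun p : Nat.Primes ↦ (p : ℝ)⁻¹) (fun p ↦ log p) t =
      ∑ p ∈ ⌊exp t⌋₊.primesLE, (p : ℝ)⁻¹ := by
  have log_le_iff {p : ℕ} (hp : p.Prime) : log p ≤ t ↔ p ≤ ⌊exp t⌋₊ := by
    rw [log_le_iff_le_exp (by exact_mod_cast hp.pos), Nat.le_floor_iff (exp_pos t).le]
  rw [summatory, Nat.Primes.tsum_eq_tsum_ite (f := fun p : ℕ ↦ if log p ≤ t then (p : ℝ)⁻¹ else 0),
    tsum_eq_sum (s := ⌊exp t⌋₊.primesLE)]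
  · refine Finset.sum_congr rfl fun p hp ↦ ?_
    obtain ⟨hle, hprime⟩ := Nat.mem_primesLE.1 hp
    rw [if_pos hprime, if_pos ((log_le_iff hprime).2 hle)]
  · intro p hp
    split_ifs with hprime hle
    · exact absurd (Nat.mem_primesLE.2 ⟨(log_le_iff hprime).1 hle, hprime⟩) hp
    · rfl
    · rfl

lemma summatory_inv_succ {t : ℝ} (ht : 0 ≤ t) :
    summatory (fun n : ℕ ↦ (n + 1 : ℝ)⁻¹) (fun n ↦ n + 1) t = harmonic ⌊t⌋₊ := by
  have succ_le_iff (n : ℕ) : (n + 1 : ℝ) ≤ t ↔ n < ⌊t⌋₊ := by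
    rw [← Nat.succ_le_iff, Nat.le_floor_iff ht]
    push_cast
    rfl
  rw [summatory, tsum_eq_sum (s := Finset.range ⌊t⌋₊)]
  · rw [harmonic]
    push_cast
    exact Finset.sum_congr rfl fun n hn ↦ if_pos ((succ_le_iff n).2 (Finset.mem_range.1 hn))
  · exact fun n hn ↦ if_neg fun h ↦ hn (Finset.mem_range.2 ((succ_le_iff n).1 h))

lemma tendsto_log_floor_sub_log :
    Tendsto (fun t : ℝ ↦ log ⌊t⌋₊ - log t) atTop (𝓝 0) := by
  have h := (tendsto_nat_floor_div_atTop (R := ℝ)).log one_ne_zero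
  rw [log_one] at h
  refine h.congr' ?_
  filter_upwards [eventually_ge_atTop 1] with t ht
  have floor_pos : 0 < ⌊t⌋₊ := Nat.floor_pos.2 ht
  rw [log_div (by positivity) (by positivity)]

lemma tendsto_log_log_floor_exp_sub_log :
    Tendsto (fun t : ℝ ↦ log (log ⌊exp t⌋₊) - log t) atTop (𝓝 0) := by
  have hratio : Tendsto (fun t : ℝ ↦ log ⌊exp t⌋₊ / t) atTop (𝓝 1) := by
    have h := ((tendsto_log_floor_sub_log.comp tendsto_exp_atTop).mul
      tendsto_inv_atTop_zero).add_const 1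
    simp only [zero_mul, zero_add] at h
    refine h.congr' ?_
    filter_upwards [eventually_gt_atTop 0] with t ht
    rw [Function.comp_apply, log_exp]
    field_simp
    ring
  have h := hratio.log one_ne_zero
  rw [log_one] at h
  refine h.congr' ?_
  filter_upwards [eventually_gt_atTop 0, hratio.eventually_ne one_ne_zero] with t ht hne
  rw [log_div (div_ne_zero_iff.1 hne).1 ht.ne']

/-- The weights `1 / p` placed at `log p` and `-1 / m` placed at `m`: their summatory function
compares Mertens' sum with a harmonic sum. The natural number `n` stands for `m = n + 1`. -/
noncomputable def mertensWeight : Nat.Primes ⊕ ℕ → ℝ :=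
  Sum.elim (fun p ↦ (p : ℝ)⁻¹) fun n ↦ -(n + 1 : ℝ)⁻¹

/-- The points at which `mertensWeight` places its masses. -/
noncomputable def mertensExponent : Nat.Primes ⊕ ℕ → ℝ :=
  Sum.elim (fun p ↦ log p) fun n ↦ n + 1

lemma mertensExponent_nonneg : ∀ i, 0 ≤ mertensExponent i
  | .inl p => log_natCast_nonneg p
  | .inr n => by simp only [mertensExponent, Sum.elim_inr]; positivity

lemma hasSum_mertensWeight_mul_exp {s : ℝ} (hs : 0 < s) :
    HasSum (fun i ↦ mertensWeight i * exp (-(s * mertensExponent i)))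
      (∑' p : Nat.Primes, (p : ℝ) ^ (-(1 + s)) + log (1 - exp (-s))) := by
  refine HasSum.sum ?_ ?_
  · have h := (Nat.Primes.summable_rpow.2 (show -(1 + s) < -1 by linarith)).hasSum
    convert h using 2 with p
    exact inv_mul_exp_neg_mul_log (by exact_mod_cast p.2.pos) s
  · simpa [mertensWeight, mertensExponent, Function.comp_def] using (hasSum_inv_succ_mul_exp hs).neg

lemma tendsto_summatory_mertensWeight {c : ℝ}
    (hc : Tendsto (fun N : ℕ ↦ ∑ p ∈ N.primesLE, (p : ℝ)⁻¹ - log (log N)) atTop (𝓝 c)) :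
    Tendsto (summatory mertensWeight mertensExponent) atTop
      (𝓝 (c - eulerMascheroniConstant)) := by
  have hprimes := hc.comp (tendsto_nat_floor_atTop.comp tendsto_exp_atTop)
  have hharmonic := tendsto_harmonic_sub_log.comp (tendsto_nat_floor_atTop (α := ℝ))
  have h := ((hprimes.sub hharmonic).add tendsto_log_log_floor_exp_sub_log).sub
    tendsto_log_floor_sub_log
  rw [add_zero, sub_zero] at h
  refine h.congr' ?_
  filter_upwards [eventually_ge_atTop 0] with t ht
  have hsummable := summable_ite_le
    (by simpa using (hasSum_mertensWeight_mul_exp one_pos).summable) t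
  have hsplit : summatory mertensWeight mertensExponent t =
      ∑ p ∈ ⌊exp t⌋₊.primesLE, (p : ℝ)⁻¹ - harmonic ⌊t⌋₊ := by
    have hinl := hsummable.comp_injective Sum.inl_injective
    have hinr := hsummable.comp_injective Sum.inr_injective
    rw [← summatory_primes_inv_log, ← summatory_inv_succ ht, sub_eq_add_neg, summatory,
      hinl.tsum_sum hinr, summatory, summatory, ← tsum_neg]
    simp only [neg_ite, neg_zero]
    rfl
  rw [hsplit]
  simp only [Function.comp_apply]
  ring

theorem tendsto_sum_primesLE_inv_sub_log_log :
    Tendsto (fun N : ℕ ↦ ∑ p ∈ N.primesLE, (p : ℝ)⁻¹ - log (log N)) atTop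
      (𝓝 (eulerMascheroniConstant - ∑' p : Nat.Primes, negLogTail (p : ℝ)⁻¹)) := by
  obtain ⟨c, hc⟩ := exists_tendsto_sum_primesLE_inv_sub_log_log
  have abel := tendsto_tsum_mul_exp_of_tendsto_summatory
    mertensExponent_nonneg (fun s hs ↦ (hasSum_mertensWeight_mul_exp hs).summable)
    (tendsto_summatory_mertensWeight hc)
  have euler : Tendsto (fun s ↦ ∑' i, mertensWeight i * exp (-(s * mertensExponent i)))
      (𝓝[>] 0) (𝓝 (-∑' p : Nat.Primes, negLogTail (p : ℝ)⁻¹)) := by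
    have h := tendsto_tsum_primes_rpow_add_log.add tendsto_log_one_sub_exp_neg_sub_log
    rw [add_zero] at h
    refine h.congr' ?_
    filter_upwards [self_mem_nhdsWithin] with s hs
    rw [(hasSum_mertensWeight_mul_exp hs).tsum_eq]
    ring
  have hlim := tendsto_nhds_unique abel euler
  rwa [show c = eulerMascheroniConstant - ∑' p : Nat.Primes, negLogTail (p : ℝ)⁻¹
    by linarith] at hc

lemma tendsto_sum_primesLE {f : ℕ → ℝ} (hf : Summable fun p : Nat.Primes ↦ f p) :
    Tendsto (fun N : ℕ ↦ ∑ p ∈ N.primesLE, f p) atTop (𝓝 (∑' p : Nat.Primes, f p)) := by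
  have hindicator : HasSum (Set.indicator {p | p.Prime} f) (∑' p : Nat.Primes, f p) :=
    hasSum_subtype_iff_indicator.1 hf.hasSum
  refine (hindicator.tendsto_sum_nat.comp (tendsto_add_atTop_nat 1)).congr fun N ↦ ?_
  classical
  rw [Function.comp_apply, Finset.sum_indicator_eq_sum_filter, Nat.primesLE_eq_filter_range]
  rfl

/-- The product `∏_{p ≤ N} (1 - 1/p)` over primes. -/
noncomputable def mertensProduct (N : ℕ) : ℝ := ∏ p ∈ N.primesLE, (1 - (p : ℝ)⁻¹)

lemma mertensProduct_eq_exp (N : ℕ) : mertensProduct N =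
    exp (-(∑ p ∈ N.primesLE, (p : ℝ)⁻¹ + ∑ p ∈ N.primesLE, negLogTail (p : ℝ)⁻¹)) := by
  rw [← Finset.sum_add_distrib, ← Finset.sum_neg_distrib, exp_sum, mertensProduct]
  refine Finset.prod_congr rfl fun p hp ↦ ?_
  have one_lt : (1 : ℝ) < p := by exact_mod_cast Nat.one_lt_of_mem_primesLE hp
  rw [negLogTail, add_sub_cancel, neg_neg, exp_log (sub_pos.2 (inv_lt_one_of_one_lt₀ one_lt))]

theorem tendsto_mertensProduct_mul_log :
    Tendsto (fun N : ℕ ↦ mertensProduct N * log N) atTop (𝓝 (exp (-eulerMascheroniConstant))) := by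
  have htail := tendsto_sum_primesLE (f := fun p ↦ negLogTail (p : ℝ)⁻¹)
    (by simpa [rpow_neg_one] using summable_negLogTail_rpow le_rfl)
  have h := (tendsto_sum_primesLE_inv_sub_log_log.add htail).neg.rexp
  rw [sub_add_cancel] at h
  refine h.congr' ?_
  filter_upwards [eventually_gt_atTop 1] with N hN
  have log_pos : 0 < log (N : ℝ) := log_pos (by exact_mod_cast hN)
  rw [mertensProduct_eq_exp, ← exp_log log_pos, ← exp_add, exp_log log_pos]
  ring_nf

end MertensConstant

section Totient

lemma one_sub_inv_natCast_mem_Icc (p : ℕ) : 1 - (p : ℝ)⁻¹ ∈ Set.Icc 0 1 :=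
  ⟨sub_nonneg.2 (Nat.cast_inv_le_one p), sub_le_self _ (by positivity)⟩

lemma mertensProduct_nonneg (N : ℕ) : 0 ≤ mertensProduct N :=
  Finset.prod_nonneg fun p _ ↦ (one_sub_inv_natCast_mem_Icc p).1

lemma totient_div_self_eq_prod {n : ℕ} (hn : n ≠ 0) :
    (n.totient : ℝ) / n = ∏ p ∈ n.primeFactors, (1 - (p : ℝ)⁻¹) := by
  rw [div_eq_iff (by exact_mod_cast hn), mul_comm]
  have h := congrArg ((↑) : ℚ → ℝ) (Nat.totient_eq_mul_prod_factors n)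
  push_cast at h
  exact h

lemma totient_primorial_div_self (N : ℕ) :
    ((primorial N).totient : ℝ) / primorial N = mertensProduct N := by
  rw [totient_div_self_eq_prod (primorial_ne_zero N), primeFactors_primorial, mertensProduct]

lemma card_large_primeFactors_mul_log_le {n : ℕ} (hn : n ≠ 0) {y : ℝ} (hy : 0 < y) :
    (n.primeFactors.filter fun p : ℕ ↦ y < p).card * log y ≤ log n := by
  set B := n.primeFactors.filter fun p : ℕ ↦ y < p
  have pow_le_prod : y ^ B.card ≤ ∏ p ∈ B, (p : ℝ) := by
    rw [← Finset.prod_const]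
    exact Finset.prod_le_prod (fun _ _ ↦ hy.le) fun p hp ↦ (Finset.mem_filter.1 hp).2.le
  have prod_le : ∏ p ∈ B, p ≤ n := Nat.le_of_dvd (Nat.pos_of_ne_zero hn) <|
    (Finset.prod_dvd_prod_of_subset _ _ _ (Finset.filter_subset _ _)).trans
      n.prod_primeFactors_dvd
  rw [← log_pow]
  refine log_le_log (by positivity) (pow_le_prod.trans ?_)
  rw [← Nat.cast_prod]
  exact_mod_cast prod_le

lemma mertensProduct_mul_le_totient_div_self {n : ℕ} (hn : n ≠ 0) {y : ℝ} (hy : 1 < y) :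
    mertensProduct ⌊y⌋₊ * (1 - log n / (y * log y)) ≤ n.totient / n := by
  have hy0 : 0 < y := by positivity
  have hlog : 0 < log y := log_pos hy
  set B := n.primeFactors.filter fun p : ℕ ↦ y < p
  have small : mertensProduct ⌊y⌋₊ ≤
      ∏ p ∈ n.primeFactors with ¬ y < (p : ℕ), (1 - (p : ℝ)⁻¹) := by
    refine Finset.prod_le_prod_of_subset_of_le_one (fun p hp ↦ ?_)
      (fun p _ ↦ (one_sub_inv_natCast_mem_Icc p).1) fun p _ _ ↦ (one_sub_inv_natCast_mem_Icc p).2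
    obtain ⟨hpn, hpy⟩ := Finset.mem_filter.1 hp
    exact Nat.mem_primesLE.2 ⟨Nat.le_floor (not_lt.1 hpy), Nat.prime_of_mem_primeFactors hpn⟩
  have large : 1 - log n / (y * log y) ≤ ∏ p ∈ B, (1 - (p : ℝ)⁻¹) :=
    calc 1 - log n / (y * log y)
      _ ≤ 1 + B.card * (-y⁻¹) := by
          have := card_large_primeFactors_mul_log_le hn hy0
          rw [mul_neg, ← sub_eq_add_neg, ← div_eq_mul_inv]
          gcongr 1 - ?_
          rw [div_le_div_iff₀ hy0 (by positivity)]
          nlinarith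
      _ ≤ (1 + -y⁻¹) ^ B.card :=
          one_add_mul_le_pow (by linarith [inv_lt_one_of_one_lt₀ hy]) _
      _ = ∏ p ∈ B, (1 - y⁻¹) := by rw [Finset.prod_const, sub_eq_add_neg]
      _ ≤ ∏ p ∈ B, (1 - (p : ℝ)⁻¹) := by
          refine Finset.prod_le_prod (fun _ _ ↦ by linarith [inv_lt_one_of_one_lt₀ hy])
            fun p hp ↦ ?_
          have := (Finset.mem_filter.1 hp).2
          gcongr
  calc mertensProduct ⌊y⌋₊ * (1 - log n / (y * log y))
    _ ≤ mertensProduct ⌊y⌋₊ * ∏ p ∈ B, (1 - (p : ℝ)⁻¹) := by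
        gcongr; exact mertensProduct_nonneg _
    _ ≤ (∏ p ∈ n.primeFactors with ¬ y < (p : ℕ), (1 - (p : ℝ)⁻¹)) * ∏ p ∈ B, (1 - (p : ℝ)⁻¹) := by
        gcongr
        exact Finset.prod_nonneg fun p _ ↦ (one_sub_inv_natCast_mem_Icc p).1
    _ = n.totient / n := by
        rw [mul_comm, Finset.prod_filter_mul_prod_filter_not, totient_div_self_eq_prod hn]

lemma liminf_eq_of_tendsto_of_tendsto_comp {α β : Type*} {f : Filter α} {g : Filter β} [g.NeBot]
    {u l : α → ℝ} {w : β → ℝ} {φ : β → α} {c : ℝ} (hl : Tendsto l f (𝓝 c)) (hlu : l ≤ᶠ[f] u)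
    (hφ : Tendsto φ g f) (huw : u ∘ φ ≤ᶠ[g] w) (hw : Tendsto w g (𝓝 c)) : liminf u f = c := by
  have : f.NeBot := hφ.neBot
  have comp_tendsto : Tendsto (u ∘ φ) g (𝓝 c) :=
    tendsto_of_tendsto_of_tendsto_of_le_of_le' (hl.comp hφ) hw (hφ.eventually hlu) huw
  have bdd : f.IsBoundedUnder (· ≥ ·) u := hl.isBoundedUnder_ge.mono_ge hlu
  have cobdd : (map φ g).IsCoboundedUnder (· ≥ ·) u :=
    IsBoundedUnder.isCoboundedUnder_ge (l := map φ g) comp_tendsto.isBoundedUnder_le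
  refine le_antisymm ?_ ?_
  · rw [← comp_tendsto.liminf_eq]
    exact hφ.liminf_le_liminf_comp cobdd bdd
  · rw [← hl.liminf_eq]
    exact liminf_le_liminf hlu hl.isBoundedUnder_ge (cobdd.mono (map_mono hφ))

lemma tendsto_mertensProduct_floor_mul_log :
    Tendsto (fun x : ℝ ↦ mertensProduct ⌊x⌋₊ * log x) atTop
      (𝓝 (exp (-eulerMascheroniConstant))) :=
  (Asymptotics.IsEquivalent.refl.mul
    (Asymptotics.isEquivalent_nat_floor.log tendsto_id)).tendsto_nhds
      (tendsto_mertensProduct_mul_log.comp tendsto_nat_floor_atTop)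

lemma tendsto_mertensProduct_mul_log_add (a : ℝ) :
    Tendsto (fun N : ℕ ↦ mertensProduct N * (log N + a)) atTop
      (𝓝 (exp (-eulerMascheroniConstant))) := by
  have tendsto_log : Tendsto (fun N : ℕ ↦ log N) atTop atTop :=
    tendsto_log_atTop.comp tendsto_natCast_atTop_atTop
  have const_isLittleO : (fun _ : ℕ ↦ a) =o[atTop] fun N : ℕ ↦ log N :=
    Asymptotics.isLittleO_const_left.2 (.inr (tendsto_abs_atTop_atTop.comp tendsto_log))
  exact (Asymptotics.IsEquivalent.refl.mul
    (Asymptotics.IsEquivalent.refl.add_isLittleO const_isLittleO).symm).tendsto_nhds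
      tendsto_mertensProduct_mul_log

lemma log_log_primorial_le {N : ℕ} (hN : 3 ≤ N) :
    log (log (primorial N)) ≤ log N + log (log 4) := by
  have hN_pos : (0 : ℝ) < N := by positivity
  have one_lt : (1 : ℝ) < primorial N := by
    exact_mod_cast (show 1 < N by omega).trans_le le_primorial_self
  have hlog : log (primorial N) ≤ N * log 4 := by
    rw [← log_pow]
    exact log_le_log (by positivity) (by exact_mod_cast primorial_le_four_pow N)
  rw [← log_mul hN_pos.ne' (log_pos (by norm_num)).ne']
  exact log_le_log (log_pos one_lt) hlog

theorem liminf_totient_div_mul_log_log :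
    liminf (fun n : ℕ ↦ (n.totient : ℝ) / n * log (log n)) atTop =
      exp (-eulerMascheroniConstant) := by
  have tendsto_log : Tendsto (fun n : ℕ ↦ log n) atTop atTop :=
    tendsto_log_atTop.comp tendsto_natCast_atTop_atTop
  have tendsto_one : Tendsto (fun x : ℝ ↦ 1 - (log x)⁻¹) atTop (𝓝 1) := by
    simpa using tendsto_log_atTop.inv_tendsto_atTop.const_sub 1
  have tendsto_lower :
      Tendsto (fun x : ℝ ↦ mertensProduct ⌊x⌋₊ * log x * (1 - (log x)⁻¹)) atTop
        (𝓝 (exp (-eulerMascheroniConstant))) := by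
    simpa only [mul_one] using tendsto_mertensProduct_floor_mul_log.mul tendsto_one
  refine liminf_eq_of_tendsto_of_tendsto_comp (tendsto_lower.comp tendsto_log) ?_
    (tendsto_atTop_mono (fun _ ↦ le_primorial_self) tendsto_id) ?_
    (tendsto_mertensProduct_mul_log_add (log (log 4)))
  · filter_upwards [tendsto_log.eventually_gt_atTop 1, eventually_ne_atTop 0] with n hlog hn
    have bound := mertensProduct_mul_le_totient_div_self hn hlog
    rw [div_mul_cancel_left₀ (by positivity)] at bound
    calc mertensProduct ⌊log n⌋₊ * log (log n) * (1 - (log (log n))⁻¹)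
      _ = mertensProduct ⌊log n⌋₊ * (1 - (log (log n))⁻¹) * log (log n) := by ring
      _ ≤ n.totient / n * log (log n) := by gcongr; exact log_nonneg hlog.le
  · filter_upwards [eventually_ge_atTop 3] with N hN
    rw [Function.comp_apply, totient_primorial_div_self]
    exact mul_le_mul_of_nonneg_left (log_log_primorial_le hN) (mertensProduct_nonneg N)

end Totient

/-- Theorem 7 (keven, odd case): for odd `k`, the minimal order of `Φ_k(n)` is
`e^{-γ} n^k / log log n`. -/
theorem minimal_order_odd (k : ℕ) (hk : 1 ≤ k) (hodd : Odd k) :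
    Filter.liminf
        (fun n : ℕ => (genTotient k n : ℝ) * Real.log (Real.log n) / (n : ℝ) ^ k)
        Filter.atTop =
      Real.exp (-Real.eulerMascheroniConstant) := by
  rw [← liminf_totient_div_mul_log_log]
  refine Filter.liminf_congr ?_
  filter_upwards [eventually_ne_atTop 0] with n hn
  rw [mul_div_right_comm, genTotient_div_pow hodd hn]
end
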